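/- arXiv:2110.14176 — 2 statements merged into one kernel-verified Lean document; each statement's English description precedes it below -/
import Mathlib

section
/- Let (G,ω) be a weighted signed graph. Then g_{01}(EDC(G,ω)) = g_{01}(G,ω), g_{10}(EDC(G,ω)) = g_{11}(G,ω) + 1, and g_{11}(EDC(G,ω)) = g_{10}(G,ω) + 1 (with the convention ∞ + 1 = ∞). -/
open SimpleGraph

namespace SignedPaper

variable {V : Type*} {W : Type*}

/-- The product of the signs (values of `σ`) along the darts of a walk. -/
def walkSign {G : SimpleGraph V} (σ : V → V → ℤ) {a b : V} (w : G.Walk a b) : ℤ :=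
  (w.darts.map fun d => σ d.toProd.1 d.toProd.2).prod

/-- The length of a walk in a weighted signed graph: the sum of the absolute
values of the weights of its edges, with multiplicity. -/
def walkWLen {G : SimpleGraph V} (ω : V → V → ℤ) {a b : V} (w : G.Walk a b) : ℕ :=
  (w.darts.map fun d => (ω d.toProd.1 d.toProd.2).natAbs).sum

/-- Walk-girth of type `ij` of a signed graph: the length of a shortest closed walk
which is negative iff `neg` and of odd length iff `odd` (`⊤` if none exists). -/
noncomputable def sGirth (G : SimpleGraph V) (σ : V → V → ℤ) (neg odd : Bool) : ℕ∞ :=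
  sInf {n : ℕ∞ | ∃ (a : V) (w : G.Walk a a), (w.length : ℕ∞) = n ∧
    (walkSign σ w < 0 ↔ neg = true) ∧ (Odd w.length ↔ odd = true)}

/-- Walk-girth of type `ij` of a weighted signed graph. -/
noncomputable def wGirth (G : SimpleGraph V) (ω : V → V → ℤ) (neg odd : Bool) : ℕ∞ :=
  sInf {n : ℕ∞ | ∃ (a : V) (w : G.Walk a a), (walkWLen ω w : ℕ∞) = n ∧
    (walkSign ω w < 0 ↔ neg = true) ∧ (Odd (walkWLen ω w) ↔ odd = true)}

/-- A graph homomorphism is a homomorphism of signed graphs if it preserves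
the signs of all closed walks. -/
def IsSignedHom {G : SimpleGraph V} {H : SimpleGraph W} (σ : V → V → ℤ) (π : W → W → ℤ)
    (f : G →g H) : Prop :=
  ∀ (a : V) (w : G.Walk a a), walkSign π (w.map f) = walkSign σ w

/-- A signed graph is `g`-wide if it has no positive closed walk of odd length, and
every negative closed walk has length at least `g` and of the same parity as `g`. -/
def gWide (G : SimpleGraph V) (σ : V → V → ℤ) (g : ℕ) : Prop :=
  (∀ (a : V) (w : G.Walk a a), 0 < walkSign σ w → ¬ Odd w.length) ∧
  (∀ (a : V) (w : G.Walk a a), walkSign σ w < 0 → g ≤ w.length ∧ (Odd w.length ↔ Odd g))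

open Classical in
/-- The algebraic distance between two vertices of a signed graph. -/
noncomputable def adist (G : SimpleGraph V) (σ : V → V → ℤ) (u v : V) : ℤ :=
  if ∃ w : G.Walk u v, w.IsPath ∧ w.length = G.dist u v ∧ 0 < walkSign σ w
  then (G.dist u v : ℤ) else -(G.dist u v : ℤ)

/-- The underlying graph of the Extended Double Cover of a signed graph:
`(v, true)` plays the role of `v⁺` and `(v, false)` of `v⁻`. -/
def EDCsg (G : SimpleGraph V) (σ : V → V → ℤ) (hσ : ∀ u v, σ u v = σ v u) :
    SimpleGraph (V × Bool) where
  Adj x y := (x.1 = y.1 ∧ x.2 ≠ y.2) ∨ (G.Adj x.1 y.1 ∧ (x.2 = y.2 ↔ 0 < σ x.1 y.1))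
  symm := .mk fun x y h => by
    rcases h with ⟨h1, h2⟩ | ⟨ha, hb⟩
    · exact Or.inl ⟨h1.symm, h2.symm⟩
    · refine Or.inr ⟨ha.symm, ?_⟩
      rw [hσ y.1 x.1, eq_comm]
      exact hb
  loopless := .mk fun x h => by
    rcases h with ⟨-, h⟩ | ⟨h, -⟩
    · exact h rfl
    · exact G.loopless.irrefl _ h

open Classical in
/-- The signature of the Extended Double Cover: edges `v⁺v⁻` are negative,
all other edges are positive. -/
noncomputable def edcSign : V × Bool → V × Bool → ℤ := fun x y =>
  if x.1 = y.1 then -1 else 1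

/-- The underlying graph of the Extended Double Cover of a weighted signed graph. -/
def EDCw (G : SimpleGraph V) : SimpleGraph (V × Bool) where
  Adj x y := (x.1 = y.1 ∧ x.2 ≠ y.2) ∨ G.Adj x.1 y.1
  symm := .mk fun x y h => by
    rcases h with ⟨h1, h2⟩ | h
    · exact Or.inl ⟨h1.symm, h2.symm⟩
    · exact Or.inr h.symm
  loopless := .mk fun x h => by
    rcases h with ⟨-, h⟩ | h
    · exact h rfl
    · exact G.loopless.irrefl _ h

open Classical in
/-- The weights of the Extended Double Cover of a weighted signed graph `(G, ω)`. -/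
noncomputable def EDCwWeight (ω : V → V → ℤ) : V × Bool → V × Bool → ℤ := fun x y =>
  if x.1 = y.1 then -1
  else if x.2 = y.2 then (if 0 < ω x.1 y.1 then ω x.1 y.1 else ω x.1 y.1 - 1)
  else (if 0 < ω x.1 y.1 then -(ω x.1 y.1 + 1) else -(ω x.1 y.1))

/-- `G` has a `K₄`-minor: there are four disjoint nonempty connected branch sets,
pairwise joined by an edge. -/
def HasK4Minor (G : SimpleGraph V) : Prop :=
  ∃ S : Fin 4 → Set V,
    (∀ i, (G.induce (S i)).Connected) ∧
    (∀ i j, i ≠ j → Disjoint (S i) (S j)) ∧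
    (∀ i j, i ≠ j → ∃ u ∈ S i, ∃ v ∈ S j, G.Adj u v)

/-- A signed graph `(B, π)` is SP-complete if every connected signed graph whose
underlying graph is finite and `K₄`-minor-free and which satisfies the conclusion of
the no-homomorphism lemma with respect to `(B, π)` admits a homomorphism to `(B, π)`. -/
def SPComplete (B : SimpleGraph W) (π : W → W → ℤ) : Prop :=
  ∀ (V' : Type) (G : SimpleGraph V') (σ : V' → V' → ℤ),
    Finite V' → (∀ u v, σ u v = σ v u) →
    (∀ u v, G.Adj u v → σ u v = 1 ∨ σ u v = -1) →
    G.Connected → ¬ HasK4Minor G →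
    (∀ neg odd : Bool, sGirth B π neg odd ≤ sGirth G σ neg odd) →
    ∃ f : G →g B, IsSignedHom σ π f

/-- The cylinder `C_{2a} □ P_b` on vertex set `{0,…,2a-1} × {0,…,b-1}`. -/
def cylT (a b : ℕ) : SimpleGraph (Fin (2 * a) × Fin b) where
  Adj x y := (x.1 = y.1 ∧ ((x.2.val : ℤ) - (y.2.val : ℤ)).natAbs = 1) ∨
    (x.2 = y.2 ∧ (((x.1.val : ℤ) - (y.1.val : ℤ)).natAbs = 1 ∨
      ((x.1.val : ℤ) - (y.1.val : ℤ)).natAbs = 2 * a - 1))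
  symm := .mk fun x y h => by
    rcases h with ⟨h1, h2⟩ | ⟨h1, h2 | h2⟩
    · exact Or.inl ⟨h1.symm, by omega⟩
    · exact Or.inr ⟨h1.symm, Or.inl (by omega)⟩
    · exact Or.inr ⟨h1.symm, Or.inr (by omega)⟩
  loopless := .mk fun x h => by
    have hpos : 0 < 2 * a := x.1.pos
    rcases h with ⟨-, h⟩ | ⟨-, h | h⟩ <;> omega

/-- Two vertices of the cylinder are antipodal if `|Δi| + |Δj| = a + b - 1`. -/
def antip (a b : ℕ) (x y : Fin (2 * a) × Fin b) : Prop :=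
  ((x.1.val : ℤ) - (y.1.val : ℤ)).natAbs + ((x.2.val : ℤ) - (y.2.val : ℤ)).natAbs = a + b - 1

/-- The twisted tube: the cylinder together with the antipodal edges `J`. -/
def twistedTube (a b : ℕ) : SimpleGraph (Fin (2 * a) × Fin b) where
  Adj x y := (cylT a b).Adj x y ∨ (x ≠ y ∧ antip a b x y)
  symm := .mk fun x y h => by
    rcases h with h | ⟨hne, h⟩
    · exact Or.inl ((cylT a b).symm.symm _ _ h)
    · refine Or.inr ⟨hne.symm, ?_⟩
      unfold antip at h ⊢
      omega
  loopless := .mk fun x h => by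
    rcases h with h | ⟨hne, -⟩
    · exact (cylT a b).loopless.irrefl x h
    · exact hne rfl

/-- The signature of the twisted tube: antipodal edges (the set `J`) are negative,
all other edges are positive. -/
def ttSign (a b : ℕ) (x y : Fin (2 * a) × Fin b) : ℤ :=
  if ((x.1.val : ℤ) - (y.1.val : ℤ)).natAbs + ((x.2.val : ℤ) - (y.2.val : ℤ)).natAbs
      = a + b - 1 then -1 else 1

/-- The underlying graph of the signed projective cube `SPC(k)`: vertices are elements
of `ℤ₂^k`, adjacent if they differ in exactly one coordinate or in all coordinates. -/
def spcGraph (k : ℕ) : SimpleGraph (Fin k → ZMod 2) where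
  Adj x y := x ≠ y ∧ (hammingDist x y = 1 ∨ hammingDist x y = k)
  symm := .mk fun x y h => ⟨h.1.symm, by rw [hammingDist_comm]; exact h.2⟩
  loopless := .mk fun x h => h.1 rfl

/-- The signature of `SPC(k)`: an edge is negative iff its endpoints differ in
all coordinates. -/
def spcSign (k : ℕ) (x y : Fin k → ZMod 2) : ℤ :=
  if hammingDist x y = k then -1 else 1

lemma spcSign_symm (k : ℕ) : ∀ x y : Fin k → ZMod 2, spcSign k x y = spcSign k y x := by
  intro x y
  unfold spcSign
  rw [hammingDist_comm]

/-- The function `f_g`. -/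
def fg (g : ℕ) (x : ℤ) : ℤ := if 0 < x then x else (g : ℤ) + x

/-- `(G, σ)` is (a realization of) the signed graph `T_g(p,q,r)`: three distinguished
vertices `x, y, z` joined by six internally disjoint paths of prescribed lengths and
signs, whose edges exhaust `G`. -/
def IsTgpqr (G : SimpleGraph V) (σ : V → V → ℤ) (g : ℕ) (p q r : ℤ) : Prop :=
  ∃ (x y z : V) (P1 P2 : G.Walk x y) (Q1 Q2 : G.Walk y z) (R1 R2 : G.Walk z x),
    x ≠ y ∧ y ≠ z ∧ z ≠ x ∧
    P1.IsPath ∧ P2.IsPath ∧ Q1.IsPath ∧ Q2.IsPath ∧ R1.IsPath ∧ R2.IsPath ∧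
    P1.length = p.natAbs ∧ P2.length = g - p.natAbs ∧
    Q1.length = q.natAbs ∧ Q2.length = g - q.natAbs ∧
    R1.length = r.natAbs ∧ R2.length = g - r.natAbs ∧
    walkSign σ P1 = Int.sign p ∧ walkSign σ P2 = -Int.sign p ∧
    walkSign σ Q1 = Int.sign q ∧ walkSign σ Q2 = -Int.sign q ∧
    walkSign σ R1 = Int.sign r ∧ walkSign σ R2 = -Int.sign r ∧
    (∀ e ∈ G.edgeSet, e ∈ P1.edges ∨ e ∈ P2.edges ∨ e ∈ Q1.edges ∨ e ∈ Q2.edges ∨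
      e ∈ R1.edges ∨ e ∈ R2.edges) ∧
    (∀ i j : Fin 6, i ≠ j → ∀ v : V,
      v ∈ (![{v | v ∈ P1.support}, {v | v ∈ P2.support}, {v | v ∈ Q1.support},
            {v | v ∈ Q2.support}, {v | v ∈ R1.support}, {v | v ∈ R2.support}] : Fin 6 → Set V) i →
      v ∈ (![{v | v ∈ P1.support}, {v | v ∈ P2.support}, {v | v ∈ Q1.support},
            {v | v ∈ Q2.support}, {v | v ∈ R1.support}, {v | v ∈ R2.support}] : Fin 6 → Set V) j →
      v = x ∨ v = y ∨ v = z)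


lemma walkSign_cons' {G : SimpleGraph V} (σ : V → V → ℤ) {a b c : V} (h : G.Adj a b)
    (w : G.Walk b c) : walkSign σ (Walk.cons h w) = σ a b * walkSign σ w := by
  simp [walkSign]

lemma walkWLen_cons' {G : SimpleGraph V} (σ : V → V → ℤ) {a b c : V} (h : G.Adj a b)
    (w : G.Walk b c) : walkWLen σ (Walk.cons h w) = (σ a b).natAbs + walkWLen σ w := by
  simp [walkWLen]

lemma mul_neg_iff' {a b : ℤ} (ha : a ≠ 0) (hb : b ≠ 0) :
    a * b ≠ 0 ∧ (a * b < 0 ↔ ¬ (a < 0 ↔ b < 0)) := by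
  refine ⟨mul_ne_zero ha hb, ?_⟩
  rw [mul_neg_iff]
  omega

lemma project_walk (G : SimpleGraph V) (ω : V → V → ℤ) (hnz : ∀ u v, G.Adj u v → ω u v ≠ 0)
    {x y : V × Bool} (w : (EDCw G).Walk x y) :
    ∃ (p : G.Walk x.1 y.1) (n : ℕ), walkWLen (EDCwWeight ω) w = walkWLen ω p + n ∧
      walkSign ω p ≠ 0 ∧ walkSign (EDCwWeight ω) w ≠ 0 ∧
      (walkSign (EDCwWeight ω) w < 0 ↔ Odd n) ∧
      (walkSign ω p < 0 ↔ (Odd n ↔ x.2 = y.2)) := by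
  induction w with
  | nil => exact ⟨Walk.nil, 0, by simp [walkWLen, walkSign]⟩
  | @cons x z y h w ih =>
    obtain ⟨p, n, hl, hp0, hw0, hw, hp⟩ := ih
    obtain ⟨u, i⟩ := x
    obtain ⟨v, j⟩ := z
    obtain ⟨t, k⟩ := y
    simp only at p hl hp0 hp
    rw [walkSign_cons', walkWLen_cons']
    by_cases huv : u = v
    · subst huv
      have hij : i ≠ j := by
        rcases h with ⟨-, h⟩ | h
        · exact h
        · exact absurd h (G.loopless.irrefl _)
      have e : EDCwWeight ω (u, i) (u, j) = -1 := by simp [EDCwWeight]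
      refine ⟨p, n + 1, ?_, hp0, ?_, ?_, ?_⟩
      · rw [e, hl]; simp; omega
      · rw [e]; simpa using hw0
      · rw [e, Nat.odd_add_one, ← hw]; omega
      · rw [hp, Nat.odd_add_one]
        cases i <;> cases j <;> cases k <;> simp_all
    · have ha : G.Adj u v := by
        rcases h with ⟨h, -⟩ | h
        · exact absurd h huv
        · exact h
      have h0 := hnz u v ha
      obtain ⟨m, hm0, hm1, hm2, hm3⟩ : ∃ m : ℕ, EDCwWeight ω (u, i) (v, j) ≠ 0 ∧
          (EDCwWeight ω (u, i) (v, j)).natAbs = (ω u v).natAbs + m ∧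
          (EDCwWeight ω (u, i) (v, j) < 0 ↔ Odd m) ∧ (ω u v < 0 ↔ (Odd m ↔ i = j)) := by
        have o1 : Odd 1 := by decide
        have o0 : ¬ Odd 0 := by decide
        by_cases hij : i = j <;> by_cases hpos : 0 < ω u v <;>
          simp only [EDCwWeight, huv, hij, hpos, if_true, if_false]
        · exact ⟨0, by omega, by omega, by simp; omega, by simp; omega⟩
        · exact ⟨1, by omega, by omega, by simp; omega, by simp; omega⟩
        · exact ⟨1, by omega, by omega, by simp; omega, by simp; omega⟩
        · exact ⟨0, by omega, by omega, by simp; omega, by simp; omega⟩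
      obtain ⟨q1, q2⟩ := mul_neg_iff' hm0 hw0
      obtain ⟨q3, q4⟩ := mul_neg_iff' h0 hp0
      refine ⟨Walk.cons ha p, m + n, ?_, ?_, q1, ?_, ?_⟩
      · change _ = walkWLen ω (Walk.cons ha p) + (m + n)
        rw [walkWLen_cons', hm1, hl]; omega
      · change walkSign ω (Walk.cons ha p) ≠ 0
        rw [walkSign_cons']; exact q3
      · rw [q2, hm2, hw, Nat.odd_add, ← Nat.not_odd_iff_even]
        by_cases o1 : Odd m <;> by_cases o2 : Odd n <;> simp [o1, o2]
      · change walkSign ω (Walk.cons ha p) < 0 ↔ (Odd (m + n) ↔ i = k)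
        rw [walkSign_cons', q4, hm3, hp, Nat.odd_add, ← Nat.not_odd_iff_even]
        clear * -
        by_cases o1 : Odd m <;> by_cases o2 : Odd n <;> simp only [o1, o2] <;>
          cases i <;> cases j <;> cases k <;> simp

lemma lift_walk (G : SimpleGraph V) (ω : V → V → ℤ) (hnz : ∀ u v, G.Adj u v → ω u v ≠ 0)
    {a b : V} (p : G.Walk a b) : walkSign ω p ≠ 0 ∧ ∀ i : Bool,
    ∃ (j : Bool) (w : (EDCw G).Walk (a, i) (b, j)), (walkSign ω p < 0 ↔ i ≠ j) ∧
      walkWLen (EDCwWeight ω) w = walkWLen ω p ∧ 0 < walkSign (EDCwWeight ω) w := by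
  induction p with
  | nil => exact ⟨by simp [walkSign], fun i => ⟨i, Walk.nil, by simp [walkSign, walkWLen]⟩⟩
  | @cons u v t h p ih =>
    obtain ⟨hp0, ih⟩ := ih
    have h0 := hnz u v h
    have huv : u ≠ v := h.ne
    obtain ⟨q3, q4⟩ := mul_neg_iff' h0 hp0
    rw [walkSign_cons', walkWLen_cons']
    refine ⟨q3, fun i => ?_⟩
    obtain ⟨k, hk, hk1, hk2⟩ : ∃ k : Bool, (ω u v < 0 ↔ i ≠ k) ∧
        (EDCwWeight ω (u, i) (v, k)).natAbs = (ω u v).natAbs ∧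
        0 < EDCwWeight ω (u, i) (v, k) := by
      by_cases hpos : 0 < ω u v
      · exact ⟨i, by simp; omega, by simp [EDCwWeight, huv, hpos]⟩
      · refine ⟨!i, by simp; omega, ?_⟩
        simp [EDCwWeight, huv, hpos]; omega
    obtain ⟨j, w, hj, hl, hs⟩ := ih k
    have hadj : (EDCw G).Adj (u, i) (v, k) := Or.inr h
    refine ⟨j, Walk.cons hadj w, ?_, ?_, ?_⟩
    · rw [q4, hk, hj]
      cases i <;> cases j <;> cases k <;> simp
    · rw [walkWLen_cons', hk1, hl]
    · rw [walkSign_cons']; positivity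

lemma wGirth_le {G : SimpleGraph V} {ω : V → V → ℤ} {neg odd : Bool} {a : V} (w : G.Walk a a)
    (h1 : walkSign ω w < 0 ↔ neg = true) (h2 : Odd (walkWLen ω w) ↔ odd = true) :
    wGirth G ω neg odd ≤ walkWLen ω w :=
  sInf_le ⟨a, w, rfl, h1, h2⟩

lemma le_wGirth_add {G : SimpleGraph V} {ω : V → V → ℤ} {neg odd : Bool} {n m : ℕ∞}
    (h : ∀ (a : V) (w : G.Walk a a), (walkSign ω w < 0 ↔ neg = true) →
      (Odd (walkWLen ω w) ↔ odd = true) → n ≤ walkWLen ω w + m) :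
    n ≤ wGirth G ω neg odd + m := by
  unfold wGirth
  rcases Set.eq_empty_or_nonempty {n : ℕ∞ | ∃ (a : V) (w : G.Walk a a),
    (walkWLen ω w : ℕ∞) = n ∧
    (walkSign ω w < 0 ↔ neg = true) ∧ (Odd (walkWLen ω w) ↔ odd = true)} with he | hne
  · rw [he]; simp
  · obtain ⟨a, w, h1, h2, h3⟩ := csInf_mem hne
    rw [← h1]
    exact h a w h2 h3

lemma girth_neg (G : SimpleGraph V) (ω : V → V → ℤ) (hnz : ∀ u v, G.Adj u v → ω u v ≠ 0)
    (o : Bool) : wGirth (EDCw G) (EDCwWeight ω) true o = wGirth G ω true (!o) + 1 := by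
  apply le_antisymm
  · apply le_wGirth_add
    intro a p h1 h2
    obtain ⟨-, hp⟩ := lift_walk G ω hnz p
    obtain ⟨j, w, hj, hl, hs⟩ := hp true
    rw [h1] at hj
    have hj' : j ≠ true := (hj.1 rfl).symm
    have hadj : (EDCw G).Adj (a, j) (a, true) := Or.inl ⟨rfl, hj'⟩
    have e : EDCwWeight ω (a, j) (a, true) = -1 := by simp [EDCwWeight]
    have e1 : walkWLen (EDCwWeight ω) (Walk.cons hadj w) = walkWLen ω p + 1 := by
      rw [walkWLen_cons', e, hl]; simp; omega
    have := wGirth_le (ω := EDCwWeight ω) (neg := true) (odd := o) (Walk.cons hadj w)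
      (by rw [walkSign_cons', e]; simp; exact hs)
      (by rw [e1, Nat.odd_add_one, h2]; simp)
    rw [e1] at this
    exact_mod_cast this
  · refine le_sInf ?_
    rintro _ ⟨x, w, rfl, h1, h2⟩
    obtain ⟨p, n, hl, hp0, hw0, hw, hp⟩ := project_walk G ω hnz w
    have hn : Odd n := hw.1 (h1.2 rfl)
    have := wGirth_le (ω := ω) (neg := true) (odd := !o) p (by simp [hp, hn])
      (by rw [hl, Nat.odd_add, ← Nat.not_odd_iff_even] at h2
          cases o <;> simp_all)
    rw [hl]
    push_cast
    gcongr
    exact_mod_cast hn.pos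

lemma girth_pos (G : SimpleGraph V) (ω : V → V → ℤ) (hnz : ∀ u v, G.Adj u v → ω u v ≠ 0)
    (o : Bool) : wGirth (EDCw G) (EDCwWeight ω) false o = wGirth G ω false o := by
  apply le_antisymm
  · rw [← add_zero (wGirth G ω false o)]
    apply le_wGirth_add
    intro a p h1 h2
    obtain ⟨-, hp⟩ := lift_walk G ω hnz p
    obtain ⟨j, w, hj, hl, hs⟩ := hp true
    have hj' : true = j := by
      by_contra hne
      simpa using h1.1 (hj.2 hne)
    subst hj'
    have := wGirth_le (ω := EDCwWeight ω) (neg := false) (odd := o) w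
      (by simp; omega) (by rw [hl, h2])
    rw [hl] at this
    simpa using this
  · refine le_sInf ?_
    rintro _ ⟨x, w, rfl, h1, h2⟩
    obtain ⟨p, n, hl, hp0, hw0, hw, hp⟩ := project_walk G ω hnz w
    have hn : ¬ Odd n := fun h => by simpa using h1.1 (hw.2 h)
    have := wGirth_le (ω := ω) (neg := false) (odd := o) p (by simp [hp, hn])
      (by rw [hl, Nat.odd_add, ← Nat.not_odd_iff_even] at h2
          cases o <;> simp_all)
    refine this.trans ?_
    rw [hl]
    exact_mod_cast Nat.le_add_right _ _

/-- the walk-girths of the Extended Double Cover of a weighted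
signed graph `(G,ω)`: `g₀₁(EDC(G,ω)) = g₀₁(G,ω)`, `g₁₀(EDC(G,ω)) = g₁₁(G,ω) + 1`
and `g₁₁(EDC(G,ω)) = g₁₀(G,ω) + 1` (in `ℕ∞`, so `∞ + 1 = ∞`). -/
theorem girth_EDC_weighted {V : Type*} [Fintype V]
    (G : SimpleGraph V) (ω : V → V → ℤ)
    (hsymm : ∀ u v, ω u v = ω v u) (hnz : ∀ u v, G.Adj u v → ω u v ≠ 0) :
    wGirth (EDCw G) (EDCwWeight ω) false true = wGirth G ω false true ∧
    wGirth (EDCw G) (EDCwWeight ω) true false = wGirth G ω true true + 1 ∧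
    wGirth (EDCw G) (EDCwWeight ω) true true = wGirth G ω true false + 1 := by
  exact ⟨girth_pos G ω hnz true, girth_neg G ω hnz false, girth_neg G ω hnz true⟩

end SignedPaper
end

section
/- Let g ≥ 3 be an integer, let a = ⌊g/2⌋ and b = ⌈g/2⌉, let u = (i,j) be a vertex of the cylinder T(g) with 0 ≤ i < 2a and 0 ≤ j < b, and let t be an integer with 1 ≤ t ≤ g − 1. Then d_{T(g)}((0,0),(i,j)) = t if and only if either (i ≤ a and i + j = t) or (i > a and i − j = 2a − t). -/
open SimpleGraph

namespace SignedPaper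

variable {V : Type*} {W : Type*}

/-- The explicit distance from the origin in the cylinder. -/
def cylHeight (a b : ℕ) (x : Fin (2 * a) × Fin b) : ℕ :=
  min x.1.val (2 * a - x.1.val) + x.2.val

lemma cylHeight_adj (a b : ℕ) (x y : Fin (2 * a) × Fin b) (h : (cylT a b).Adj x y) :
    cylHeight a b y ≤ cylHeight a b x + 1 := by
  obtain ⟨⟨i, hi⟩, ⟨j, hj⟩⟩ := x
  obtain ⟨⟨k, hk⟩, ⟨l, hl⟩⟩ := y
  simp only [cylT, cylHeight, Fin.mk.injEq] at h ⊢
  omega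

lemma cylHeight_walk (a b : ℕ) {x y : Fin (2 * a) × Fin b} (w : (cylT a b).Walk x y) :
    cylHeight a b y ≤ cylHeight a b x + w.length := by
  induction w with
  | nil => simp
  | cons h p ih =>
    have := cylHeight_adj a b _ _ h
    rw [SimpleGraph.Walk.length_cons]
    omega

lemma cyl_exists_walk (a b : ℕ) (ha : 0 < 2 * a) (hb : 0 < b) (n : ℕ) :
    ∀ u : Fin (2 * a) × Fin b, cylHeight a b u = n →
      ∃ w : (cylT a b).Walk (⟨0, ha⟩, ⟨0, hb⟩) u, w.length = n := by
  induction n with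
  | zero =>
    rintro ⟨⟨i, hi⟩, ⟨j, hj⟩⟩ h
    simp only [cylHeight] at h
    obtain rfl : i = 0 := by omega
    obtain rfl : j = 0 := by omega
    exact ⟨SimpleGraph.Walk.nil, rfl⟩
  | succ n ih =>
    intro u h
    have key : ∃ v, cylHeight a b v = n ∧ (cylT a b).Adj v u := by
      obtain ⟨⟨i, hi⟩, ⟨j, hj⟩⟩ := u
      simp only [cylHeight] at h
      by_cases hj0 : j = 0
      · by_cases hia : i ≤ a
        · refine ⟨(⟨i - 1, by omega⟩, ⟨j, hj⟩), ?_, ?_⟩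
          · simp only [cylHeight]; omega
          · exact Or.inr ⟨rfl, Or.inl (by simp only; omega)⟩
        · by_cases hl : i + 1 = 2 * a
          · refine ⟨(⟨0, ha⟩, ⟨j, hj⟩), ?_, ?_⟩
            · simp only [cylHeight]; omega
            · exact Or.inr ⟨rfl, Or.inr (by simp only; omega)⟩
          · refine ⟨(⟨i + 1, by omega⟩, ⟨j, hj⟩), ?_, ?_⟩
            · simp only [cylHeight]; omega
            · exact Or.inr ⟨rfl, Or.inl (by simp only; omega)⟩
      · refine ⟨(⟨i, hi⟩, ⟨j - 1, by omega⟩), ?_, ?_⟩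
        · simp only [cylHeight]; omega
        · exact Or.inl ⟨rfl, by simp only; omega⟩
    obtain ⟨v, hv, hadj⟩ := key
    obtain ⟨w, hw⟩ := ih v hv
    exact ⟨w.concat hadj, by rw [SimpleGraph.Walk.length_concat, hw]⟩

lemma cyl_dist_eq (a b : ℕ) (ha : 0 < 2 * a) (hb : 0 < b) (u : Fin (2 * a) × Fin b) :
    (cylT a b).dist (⟨0, ha⟩, ⟨0, hb⟩) u = cylHeight a b u := by
  obtain ⟨w, hw⟩ := cyl_exists_walk a b ha hb _ u rfl
  apply le_antisymm
  · rw [← hw]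
    exact SimpleGraph.dist_le w
  · obtain ⟨p, hp⟩ := SimpleGraph.Reachable.exists_walk_length_eq_dist ⟨w⟩
    have := cylHeight_walk a b p
    rw [hp] at this
    simpa [cylHeight] using this

/-- characterization of vertices of `T(g)` at distance `t` from the
origin `(0,0)`, for `1 ≤ t ≤ g−1`: `d((0,0),(i,j)) = t` iff either `i ≤ a` and
`i + j = t`, or `i > a` and `i − j = 2a − t`. -/
theorem cyl_dist_from_origin (g : ℕ) (hg : 3 ≤ g)
    (u : Fin (2 * (g / 2)) × Fin ((g + 1) / 2)) (t : ℕ) (ht1 : 1 ≤ t) (ht2 : t ≤ g - 1) :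
    (cylT (g / 2) ((g + 1) / 2)).dist (⟨0, by omega⟩, ⟨0, by omega⟩) u = t ↔
      ((u.1.val ≤ g / 2 ∧ u.1.val + u.2.val = t) ∨
       (g / 2 < u.1.val ∧ (u.1.val : ℤ) - (u.2.val : ℤ) = ((2 * (g / 2) : ℕ) : ℤ) - (t : ℤ))) := by
  rw [cyl_dist_eq]
  obtain ⟨⟨i, hi⟩, ⟨j, hj⟩⟩ := u
  simp only [cylHeight]
  omega

end SignedPaper
end
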